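/- A set S of n-qubit Pauli operators is contextual if and only if there exists a determining tree for −𝟙 (the negative of the 2^n × 2^n identity matrix) over S whose determining set is empty. -/

import Mathlib

/-!
Gluing a determining tree for `A` and one for `-A` below a common root gives a tree whose root
is `A * (-A) = -1`, because Pauli operators square to the identity (`IsPauli.mul_self`) and
`A`, `-A` commute. Leaf multiplicities add under gluing, so if the two determining sets agree,
every multiplicity becomes even (`detSet_join_eq_empty`).
Conversely, gluing two copies of a tree for `-1` gives a tree for `1` with empty determining
set, so `A = 1` witnesses contextuality.
-/


open Matrix

/-- Index type for `n` qubits: `Fin n → Fin 2` has cardinality `2^n`. -/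
abbrev QubitIdx (n : ℕ) := Fin n → Fin 2

/-- `2^n × 2^n` complex matrices. -/
abbrev Mat (n : ℕ) := Matrix (QubitIdx n) (QubitIdx n) ℂ

/-- The four single-qubit Pauli matrices `I, X, Y, Z`. -/
noncomputable def pauliMat : Fin 4 → Matrix (Fin 2) (Fin 2) ℂ :=
  ![1, !![0, 1; 1, 0], !![0, -Complex.I; Complex.I, 0], !![1, 0; 0, -1]]

/-- The tensor product `P₁ ⊗ ⋯ ⊗ Pₙ` of single-qubit Pauli matrices. -/
noncomputable def pauliTensor (n : ℕ) (f : Fin n → Fin 4) : Mat n :=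
  fun i k => ∏ j, pauliMat (f j) (i j) (k j)

/-- An `n`-qubit Pauli operator: `ε • P₁ ⊗ ⋯ ⊗ Pₙ` with `ε ∈ {1, -1}`. -/
def IsPauli (n : ℕ) (M : Mat n) : Prop :=
  ∃ (ε : ℂ) (f : Fin n → Fin 4), (ε = 1 ∨ ε = -1) ∧ M = ε • pauliTensor n f

/-- Two operators anticommute. -/
def PAntiCommute {n : ℕ} (A B : Mat n) : Prop := A * B = -(B * A)

/-- Finite rooted trees whose nodes are labeled by `2^n × 2^n` matrices.
A `leaf` has no children; a `node` has a (finite) list of children. -/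
inductive PTree (n : ℕ) : Type
  | leaf : Mat n → PTree n
  | node : Mat n → List (PTree n) → PTree n

namespace PTree

variable {n : ℕ}

/-- The label of the root of the tree. -/
def label : PTree n → Mat n
  | leaf M => M
  | node M _ => M

mutual
/-- The multiset of leaf labels of the tree. -/
def leaves : PTree n → Multiset (Mat n)
  | .leaf M => {M}
  | .node _ cs => leavesList cs
/-- The multiset of leaf labels of a list of trees. -/
def leavesList : List (PTree n) → Multiset (Mat n)
  | [] => 0
  | c :: cs => c.leaves + leavesList cs
end

mutual
/-- The list of leaf labels of the tree in depth-first (left-to-right) order. -/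
def leafList : PTree n → List (Mat n)
  | .leaf M => [M]
  | .node _ cs => leafListList cs
/-- The list of leaf labels of a list of trees, in depth-first order. -/
def leafListList : List (PTree n) → List (Mat n)
  | [] => []
  | c :: cs => c.leafList ++ leafListList cs
end

mutual
/-- The multiset of all node labels of the tree. -/
def nodeLabels : PTree n → Multiset (Mat n)
  | .leaf M => {M}
  | .node M cs => M ::ₘ nodeLabelsList cs
/-- The multiset of all node labels of a list of trees. -/
def nodeLabelsList : List (PTree n) → Multiset (Mat n)
  | [] => 0
  | c :: cs => c.nodeLabels + nodeLabelsList cs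
end

/-- The multiset of labels of all nodes at depth ≥ 2, i.e. strictly below
the children of the root. -/
def deepLabels : PTree n → Multiset (Mat n)
  | .leaf _ => 0
  | .node _ cs => (cs.map fun c =>
      match c with
      | .leaf _ => (0 : Multiset (Mat n))
      | .node _ cs' => nodeLabelsList cs').sum

/-- A valid determining tree over a set `S`: every leaf is labeled by an
element of `S`, every node is labeled by a Pauli operator, and for every
internal node, the labels of its children pairwise commute and the label of
the node is the matrix product of the labels of its children. -/
inductive Valid (S : Set (Mat n)) : PTree n → Prop
  | leaf {M : Mat n} : M ∈ S → Valid S (PTree.leaf M)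
  | node {M : Mat n} {cs : List (PTree n)} :
      IsPauli n M →
      M = (cs.map label).prod →
      cs.Pairwise (fun a b => Commute a.label b.label) →
      (∀ c ∈ cs, Valid S c) →
      Valid S (PTree.node M cs)

/-- Every internal node of the tree has at most two children. -/
inductive Binary : PTree n → Prop
  | leaf (M : Mat n) : Binary (PTree.leaf M)
  | node (M : Mat n) (cs : List (PTree n)) :
      cs.length ≤ 2 → (∀ c ∈ cs, Binary c) → Binary (PTree.node M cs)

open scoped Classical in
/-- The determining set of a tree: the set of operators occurring with odd
total multiplicity among its leaves. -/
noncomputable def detSet (τ : PTree n) : Set (Mat n) :=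
  {M | Odd (τ.leaves.count M)}

end PTree

/-- `τ` is a determining tree for `A` over `S`. -/
def IsDetTree {n : ℕ} (S : Set (Mat n)) (A : Mat n) (τ : PTree n) : Prop :=
  PTree.Valid S τ ∧ τ.label = A

/-- A set `S` of Pauli operators is contextual if for some Pauli operator `A`
there are determining trees for `A` and for `-A` over `S` with identical
determining sets. -/
def Contextual (n : ℕ) (S : Set (Mat n)) : Prop :=
  ∃ (A : Mat n) (τ τ' : PTree n), IsPauli n A ∧
    IsDetTree S A τ ∧ IsDetTree S (-A) τ' ∧ τ.detSet = τ'.detSet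

theorem pauliMat_mul_self (a : Fin 4) : pauliMat a * pauliMat a = 1 := by
  fin_cases a <;> ext i j <;> fin_cases i <;> fin_cases j <;>
    simp [pauliMat, Matrix.mul_apply]

theorem prod_one_apply {n : ℕ} (i k : QubitIdx n) :
    ∏ j, (1 : Matrix (Fin 2) (Fin 2) ℂ) (i j) (k j) = (1 : Mat n) i k := by
  by_cases h : i = k
  · subst h
    simp
  · obtain ⟨j, hj⟩ := Function.ne_iff.mp h
    rw [Matrix.one_apply_ne h]
    exact Finset.prod_eq_zero (Finset.mem_univ j) (Matrix.one_apply_ne hj)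

theorem pauliTensor_mul_self {n : ℕ} (f : Fin n → Fin 4) :
    pauliTensor n f * pauliTensor n f = 1 := by
  ext i k
  -- The sum over basis indices of a product over qubits factors qubit by qubit.
  have h := Finset.prod_univ_sum (fun _ : Fin n => (Finset.univ : Finset (Fin 2)))
    (fun j x => pauliMat (f j) (i j) x * pauliMat (f j) x (k j))
  rw [Fintype.piFinset_univ] at h
  simp only [Matrix.mul_apply, pauliTensor, ← Finset.prod_mul_distrib]
  rw [← h, ← prod_one_apply]
  refine Finset.prod_congr rfl fun j _ => ?_
  rw [← pauliMat_mul_self (f j), Matrix.mul_apply]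

theorem IsPauli.mul_self {n : ℕ} {A : Mat n} (hA : IsPauli n A) : A * A = 1 := by
  obtain ⟨ε, f, hε, rfl⟩ := hA
  rcases hε with rfl | rfl <;> simp [pauliTensor_mul_self]

theorem pauliTensor_zero (n : ℕ) : pauliTensor n (fun _ => 0) = 1 := by
  ext i k
  rw [← prod_one_apply]
  rfl

theorem isPauli_one (n : ℕ) : IsPauli n 1 :=
  ⟨1, fun _ => 0, Or.inl rfl, by rw [pauliTensor_zero, one_smul]⟩

theorem isPauli_neg_one (n : ℕ) : IsPauli n (-1) :=
  ⟨-1, fun _ => 0, Or.inr rfl, by rw [pauliTensor_zero, neg_one_smul]⟩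

theorem isDetTree_join {n : ℕ} {S : Set (Mat n)} {A B M : Mat n} {τ τ' : PTree n}
    (hτ : IsDetTree S A τ) (hτ' : IsDetTree S B τ') (hM : IsPauli n M)
    (hprod : M = A * B) (hcomm : Commute A B) :
    IsDetTree S M (.node M [τ, τ']) := by
  obtain ⟨hv, rfl⟩ := hτ
  obtain ⟨hv', rfl⟩ := hτ'
  refine ⟨.node hM (by simpa using hprod) (by simpa using hcomm) ?_, rfl⟩
  intro c hc
  rcases List.mem_pair.mp hc with rfl | rfl
  · exact hv
  · exact hv'

theorem detSet_join_eq_empty {n : ℕ} {τ τ' : PTree n} (M : Mat n)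
    (h : τ.detSet = τ'.detSet) : (PTree.node M [τ, τ']).detSet = ∅ := by
  classical
  refine Set.eq_empty_iff_forall_notMem.mpr fun B hB => ?_
  have hiff := Set.ext_iff.mp h B
  simp only [PTree.detSet, Set.mem_ofPred_eq, PTree.leaves, PTree.leavesList,
    Multiset.count_add, add_zero] at hB hiff
  rw [Nat.odd_add, ← Nat.not_odd_iff_even] at hB
  tauto

/-- `S` is contextual iff there is a determining tree for `-𝟙`
over `S` whose determining set is empty. -/
theorem contextual_iff_detTree_neg_one {n : ℕ} (S : Set (Mat n))
    (hS : ∀ M ∈ S, IsPauli n M) :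
    Contextual n S ↔
      ∃ τ : PTree n, IsDetTree S (-(1 : Mat n)) τ ∧ τ.detSet = ∅ := by
  constructor
  · rintro ⟨A, τ, τ', hA, hτ, hτ', hdet⟩
    refine ⟨.node (-1) [τ, τ'], ?_, detSet_join_eq_empty _ hdet⟩
    exact isDetTree_join hτ hτ' (isPauli_neg_one n) (by rw [mul_neg, hA.mul_self])
      (Commute.refl A).neg_right
  · rintro ⟨τ, hτ, hdet⟩
    refine ⟨1, .node 1 [τ, τ], τ, isPauli_one n, ?_, hτ, ?_⟩
    · exact isDetTree_join hτ hτ (isPauli_one n) (by simp) (Commute.refl _)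
    · rw [detSet_join_eq_empty 1 rfl, hdet]
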